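/- Assume there exists a set N ⊆ [0,1] of positive Lebesgue outer measure such that for every function g : N → ℕ^ℕ there exists h : ℕ → ℕ with g(x) ≤* h for all x ∈ N (i.e. non(N) < 𝔟). Let C : ℕ → 𝒫(ℕ) be a nondecreasing sequence of subsets of ℕ generating the ideal I = {A ⊆ ℕ : A ⊆ C_k for some k}, let ε > 0, and let f_n : [0,1] → [0,1] be a sequence converging to 0 I-pointwise on [0,1]. Then there exists A ⊆ [0,1] with m*(A) ≥ 1 − ε such that f_n converges to 0 I-uniformly on A. -/

import Mathlib

open MeasureTheory Filter Set

/-- `f` converges to `0` `I`-pointwise on `A`, where `I` is the ideal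
generated by the nondecreasing sequence `C`. -/
def CgPointwise (C : ℕ → Set ℕ) (f : ℕ → ℝ → ℝ) (A : Set ℝ) : Prop :=
  ∀ δ : ℝ, 0 < δ → ∀ x ∈ A, ∃ k : ℕ, {n | δ ≤ f n x} ⊆ C k

/-- `f` converges to `0` `I`-uniformly on `A`, where `I` is the ideal
generated by the nondecreasing sequence `C`. -/
def CgUniform (C : ℕ → Set ℕ) (f : ℕ → ℝ → ℝ) (A : Set ℝ) : Prop :=
  ∀ δ : ℝ, 0 < δ → ∃ k : ℕ, ∀ x ∈ A, {n | δ ≤ f n x} ⊆ C k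

/-- A set of functions `ℕ → ℕ` is bounded if a single `h : ℕ → ℕ` dominates
all of its members everywhere. -/
def BddNatFun (S : Set (ℕ → ℕ)) : Prop :=
  ∃ h : ℕ → ℕ, ∀ f ∈ S, ∀ n, f n ≤ h n

/-! Convergence modulo the ideal generated by `C` is convergence along the filter `F` dual to the
ideal, and `F` is countably generated. A set `S` with `|S| < 𝔟` carries a bound, up to an additive
constant, for the moduli of convergence of all its points, so `S` is an increasing union of sets on
which the convergence is uniform, and Lebesgue outer measure is continuous along such unions.
It remains to find such an `S` of full outer measure in `[0, 1]`: the rational translates of a set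
of positive outer measure cover one, because the translations by `ℚ` are ergodic on `ℝ`. -/

open scoped Pointwise Topology Uniformity

section BoundingNumber

variable {α β ι : Type*}

/-- The set `s` has cardinality less than the bounding number `𝔟`: every family of functions
`ℕ → ℕ` indexed by `s` is bounded for `≤*`. The families are indexed by the ambient type, their
values outside `s` being irrelevant. -/
def CardLTBounding (s : Set α) : Prop :=
  ∀ g : α → ℕ → ℕ, ∃ h : ℕ → ℕ, ∀ x ∈ s, g x ≤ᶠ[atTop] h

lemma exists_forall_eventuallyLE_atTop [Countable ι] [SemilatticeSup β] [Nonempty β]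
    (h : ι → ℕ → β) : ∃ H : ℕ → β, ∀ i, h i ≤ᶠ[atTop] H := by
  cases isEmpty_or_nonempty ι with
  | inl _ => exact ⟨fun _ ↦ Classical.arbitrary β, isEmptyElim⟩
  | inr _ =>
    obtain ⟨e, he⟩ := exists_surjective_nat ι
    refine ⟨fun n ↦ partialSups (fun k ↦ h (e k) n) n, he.forall.2 fun k ↦ ?_⟩
    filter_upwards [eventually_ge_atTop k] with n hkn
    exact le_partialSups_of_le (fun k ↦ h (e k) n) hkn

lemma exists_forall_le_add_of_eventuallyLE {a b : ℕ → ℕ} (hab : a ≤ᶠ[atTop] b) :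
    ∃ m, ∀ n, a n ≤ b n + m := by
  have hbdd : IsBoundedUnder (· ≤ ·) atTop (a - b) :=
    isBoundedUnder_of_eventually_le (hab.mono fun n hn ↦ (Nat.sub_eq_zero_of_le hn).le)
  obtain ⟨m, hm⟩ := hbdd.bddAbove_range
  exact ⟨m, fun n ↦ tsub_le_iff_left.1 (hm (mem_range_self n))⟩

namespace CardLTBounding

variable {s t : Set α}

lemma mono (ht : CardLTBounding t) (hst : s ⊆ t) : CardLTBounding s := fun g ↦
  (ht g).imp fun _ hh x hx ↦ hh x (hst hx)

lemma image (hs : CardLTBounding s) (e : α → β) : CardLTBounding (e '' s) := fun g ↦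
  (hs (g ∘ e)).imp fun _ hh ↦ forall_mem_image.2 hh

lemma iUnion [Countable ι] {s : ι → Set α} (hs : ∀ i, CardLTBounding (s i)) :
    CardLTBounding (⋃ i, s i) := by
  intro g
  choose h hh using fun i ↦ hs i g
  obtain ⟨H, hH⟩ := exists_forall_eventuallyLE_atTop h
  refine ⟨H, fun x hx ↦ ?_⟩
  obtain ⟨i, hi⟩ := mem_iUnion.1 hx
  exact (hh i x hi).trans (hH i)

theorem exists_monotone_iUnion_eq_tendstoUniformlyOn {Y : Type*} [UniformSpace Y]
    [(𝓤 Y).IsCountablyGenerated] {F : Filter ι} [F.IsCountablyGenerated] {f : ι → α → Y}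
    {g : α → Y} (hs : CardLTBounding s) (hf : ∀ x ∈ s, Tendsto (f · x) F (𝓝 (g x))) :
    ∃ A : ℕ → Set α, Monotone A ∧ ⋃ m, A m = s ∧ ∀ m, TendstoUniformlyOn f g F (A m) := by
  obtain ⟨U, hU⟩ := (𝓤 Y).exists_antitone_basis
  obtain ⟨V, hV⟩ := F.exists_antitone_basis
  have exists_modulus (x : α) (j : ℕ) : ∃ k, x ∈ s → ∀ i ∈ V k, (g x, f i x) ∈ U j := by
    by_cases hx : x ∈ s
    · obtain ⟨k, -, hk⟩ := hV.toHasBasis.mem_iff.1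
        (Uniform.tendsto_nhds_right.1 (hf x hx) (hU.mem j))
      exact ⟨k, fun _ _ hi ↦ hk hi⟩
    · exact ⟨0, fun h ↦ absurd h hx⟩
  choose φ hφ using exists_modulus
  obtain ⟨h, hh⟩ := hs φ
  refine ⟨fun m ↦ {x ∈ s | ∀ j, φ x j ≤ h j + m},
    fun m m' hm x hx ↦ ⟨hx.1, fun j ↦ (hx.2 j).trans (by gcongr)⟩, ?_, fun m u hu ↦ ?_⟩
  · refine (iUnion_subset fun m ↦ sep_subset s _).antisymm fun x hx ↦ ?_
    exact mem_iUnion.2 ((exists_forall_le_add_of_eventuallyLE (hh x hx)).imp fun _ hm ↦ ⟨hx, hm⟩)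
  · obtain ⟨j, -, hj⟩ := hU.toHasBasis.mem_iff.1 hu
    filter_upwards [hV.mem (h j + m)] with i hi x hx
    exact hj (hφ x j hx.1 i (hV.antitone (hx.2 j) hi))

end CardLTBounding

end BoundingNumber

lemma toMeasurable_ae_le_of_subset {X : Type*} [MeasurableSpace X] {μ : Measure X} [SFinite μ]
    {s t : Set X} (hst : s ⊆ t) (ht : MeasurableSet t) : toMeasurable μ s ≤ᵐ[μ] t := by
  rw [ae_le_set, sdiff_eq, Measure.measure_toMeasurable_inter_of_sFinite ht.compl, ← sdiff_eq,
    sdiff_eq_empty.2 hst, measure_empty]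

section Ergodic

variable {Γ X : Type*} [Group Γ] [MulAction Γ X]

@[to_additive]
lemma preimage_smul_iUnion_smul (γ : Γ) (N : Set X) :
    (γ • ·) ⁻¹' (⋃ γ' : Γ, γ' • N) = ⋃ γ' : Γ, γ' • N := by
  rw [preimage_smul, smul_set_iUnion]
  simp only [smul_smul]
  exact (Group.mulLeft_bijective γ⁻¹).surjective.iUnion_comp (· • N)

variable [MeasurableSpace X] [MeasurableConstSMul Γ X] {μ : Measure X}

@[to_additive]
lemma preimage_smul_ae_eq_of_forall_ae_le_preimage_smul [SMulInvariantMeasure Γ X μ] {s : Set X}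
    (hs : ∀ γ : Γ, s ≤ᵐ[μ] (γ • ·) ⁻¹' s) (γ : Γ) : (γ • ·) ⁻¹' s =ᵐ[μ] s := by
  have hpull : (γ • ·) ⁻¹' s ≤ᵐ[μ] (γ • ·) ⁻¹' ((γ⁻¹ • ·) ⁻¹' s) :=
    (measurePreserving_smul γ μ).quasiMeasurePreserving.tendsto_ae.eventually (hs γ⁻¹)
  simp only [preimage_preimage, inv_smul_smul, preimage_id'] at hpull
  exact hpull.antisymm (hs γ)

@[to_additive]
theorem measure_inter_eq_of_forall_preimage_smul_eq [ErgodicSMul Γ X μ] [SFinite μ] {U S : Set X}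
    (hU : ∀ γ : Γ, (γ • ·) ⁻¹' U = U) (hU₀ : μ U ≠ 0) (hS : MeasurableSet S) :
    μ (U ∩ S) = μ S := by
  have hM : MeasurableSet (toMeasurable μ U) := measurableSet_toMeasurable μ U
  have hinv (γ : Γ) : toMeasurable μ U ≤ᵐ[μ] (γ • ·) ⁻¹' toMeasurable μ U :=
    toMeasurable_ae_le_of_subset ((hU γ).ge.trans (preimage_mono (subset_toMeasurable μ U)))
      (hM.preimage (measurable_const_smul γ))
  have hconst := aeconst_of_forall_preimage_smul_ae_eq Γ hM.nullMeasurableSet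
    (preimage_smul_ae_eq_of_forall_ae_le_preimage_smul hinv)
  have hconull : toMeasurable μ U =ᵐ[μ] univ := (eventuallyConst_set'.1 hconst).resolve_left
    fun h ↦ hU₀ (by rw [← measure_toMeasurable, measure_congr h, measure_empty])
  calc μ (U ∩ S) = μ (toMeasurable μ U ∩ S) :=
        (Measure.measure_toMeasurable_inter_of_sFinite hS U).symm
    _ = μ (univ ∩ S) := measure_congr (hconull.inter .rfl)
    _ = μ S := by rw [univ_inter]

end Ergodic

@[to_additive]
theorem ergodicSMul_of_dense {G : Type*} [Group G] [TopologicalSpace G] [IsTopologicalGroup G]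
    [LocallyCompactSpace G] [SecondCountableTopology G] [MeasurableSpace G] [BorelSpace G]
    (μ : Measure G) [μ.IsHaarMeasure] [μ.InnerRegular] {Γ : Subgroup G} [Countable Γ]
    (hΓ : Dense (Γ : Set G)) : ErgodicSMul Γ G μ := by
  refine ⟨fun {s} hs hinv ↦ aeconst_of_forall_preimage_smul_ae_eq G hs.nullMeasurableSet
    (preimage_smul_ae_eq_of_forall_ae_le_preimage_smul fun g ↦ ?_)⟩
  have hcore : (⋂ γ : Γ, (γ • ·) ⁻¹' s) =ᵐ[μ] s := by
    simpa only [iInter_const] using Filter.EventuallyEq.countable_iInter hinv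
  refine hcore.symm.le.trans (ae_le_set.2 ?_)
  set E := (⋂ γ : Γ, (γ • ·) ⁻¹' s) \ (g • ·) ⁻¹' s
  have hE : MeasurableSet E := (MeasurableSet.iInter fun γ ↦
    hs.preimage (measurable_const_smul γ)).diff (hs.preimage (measurable_const_smul g))
  by_contra hE₀
  -- Steinhaus: `g * (b / a) ∈ Γ` for some `a, b ∈ E`; hence `g * b` is in the `Γ`-orbit of `a`,
  -- which lies in `s`.
  have hnhds : g • (E / E) ∈ 𝓝 g := by
    simpa using smul_mem_nhds_smul g
      (Measure.div_mem_nhds_one_of_haar_pos μ E hE (pos_iff_ne_zero.2 hE₀))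
  obtain ⟨_, hγ, _, ⟨b, hb, a, ha, rfl⟩, rfl⟩ := hΓ.inter_nhds_nonempty hnhds
  exact hb.2 (by simpa [Subgroup.smul_def, mul_assoc] using mem_iInter.1 ha.1 ⟨_, hγ⟩)

/-- The filter dual to the ideal generated by the sets `C k`: its members are the complements of
the sets of the ideal, so convergence along it is convergence modulo the ideal. -/
def idealDualFilter {ι : Type*} (C : ℕ → Set ι) : Filter ι :=
  ⨅ k, 𝓟 (C k)ᶜ

instance {ι : Type*} (C : ℕ → Set ι) : (idealDualFilter C).IsCountablyGenerated :=
  inferInstanceAs (⨅ k, 𝓟 (C k)ᶜ).IsCountablyGenerated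

lemma hasBasis_idealDualFilter {ι : Type*} {C : ℕ → Set ι} (hC : Monotone C) :
    (idealDualFilter C).HasBasis (fun _ ↦ True) fun k ↦ (C k)ᶜ :=
  hasBasis_iInf_principal (Antitone.directed_ge fun _ _ hkl ↦ compl_subset_compl.2 (hC hkl))

section CgConvergence

variable {C : ℕ → Set ℕ} {f : ℕ → ℝ → ℝ} {A : Set ℝ}

lemma cgUniform_iff_tendstoUniformlyOn (hC : Monotone C) (hf : ∀ n, ∀ x ∈ A, 0 ≤ f n x) :
    CgUniform C f A ↔ TendstoUniformlyOn f 0 (idealDualFilter C) A := by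
  rw [Metric.tendstoUniformlyOn_iff]
  refine forall₂_congr fun δ _ ↦ ?_
  have hmod (k : ℕ) : (∀ x ∈ A, {n | δ ≤ f n x} ⊆ C k) ↔
      ∀ n ∈ (C k)ᶜ, ∀ x ∈ A, dist ((0 : ℝ → ℝ) x) (f n x) < δ := by
    have hdist (n : ℕ) (x : ℝ) (hx : x ∈ A) : dist ((0 : ℝ → ℝ) x) (f n x) = f n x := by
      rw [Pi.zero_apply, dist_zero_left, Real.norm_of_nonneg (hf n x hx)]
    simp +contextual only [hdist, mem_compl_iff, ← not_le]
    exact ⟨fun h n hn x hx hδ ↦ hn (h x hx hδ), fun h x hx n hδ ↦ not_not.1 fun hn ↦ h n hn x hx hδ⟩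
  simp only [hmod, (hasBasis_idealDualFilter hC).eventually_iff, true_and]

lemma cgPointwise_iff_tendsto (hC : Monotone C) (hf : ∀ n, ∀ x ∈ A, 0 ≤ f n x) :
    CgPointwise C f A ↔ ∀ x ∈ A, Tendsto (f · x) (idealDualFilter C) (𝓝 0) := by
  have hsingleton : CgPointwise C f A ↔ ∀ x ∈ A, CgUniform C f {x} := by
    simp only [CgPointwise, CgUniform, mem_singleton_iff, forall_eq]
    tauto
  rw [hsingleton]
  refine forall₂_congr fun x hx ↦ ?_
  rw [cgUniform_iff_tendstoUniformlyOn hC (by simpa using fun n ↦ hf n x hx)]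
  exact tendstoUniformlyOn_singleton_iff_tendsto

end CgConvergence

theorem stmt_12_general {Γ X Y ι : Type*} [AddGroup Γ] [Countable Γ] [AddAction Γ X]
    [MeasurableSpace X] [MeasurableConstVAdd Γ X] {μ : Measure X} [SFinite μ] [ErgodicVAdd Γ X μ]
    [UniformSpace Y] [(𝓤 Y).IsCountablyGenerated] {F : Filter ι} [F.IsCountablyGenerated]
    {N S : Set X} (hN : CardLTBounding N) (hN₀ : μ N ≠ 0) (hS : MeasurableSet S)
    {f : ι → X → Y} {g : X → Y} (hf : ∀ x ∈ S, Tendsto (f · x) F (𝓝 (g x)))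
    {c : ENNReal} (hc : c < μ S) : ∃ A ⊆ S, c < μ A ∧ TendstoUniformlyOn f g F A := by
  set U : Set X := ⋃ γ : Γ, γ +ᵥ N
  have hNU : N ⊆ U := by simpa using subset_iUnion (fun γ : Γ ↦ γ +ᵥ N) 0
  have hU : CardLTBounding U := .iUnion fun γ ↦ hN.image (γ +ᵥ ·)
  have hUS : μ (U ∩ S) = μ S := measure_inter_eq_of_forall_preimage_vadd_eq
    (fun γ : Γ ↦ preimage_vadd_iUnion_vadd γ N) (mt (measure_mono_null hNU) hN₀) hS
  obtain ⟨A, hA, hAUS, hunif⟩ :=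
    (hU.mono inter_subset_left).exists_monotone_iUnion_eq_tendstoUniformlyOn
      fun x (hx : x ∈ U ∩ S) ↦ hf x hx.2
  rw [← hUS, ← hAUS, hA.measure_iUnion] at hc
  obtain ⟨m, hm⟩ := lt_iSup_iff.1 hc
  exact ⟨A m, (subset_iUnion A m).trans (hAUS.trans_subset inter_subset_right), hm, hunif m⟩

theorem stmt_12
    (hyp : ∃ N : Set ℝ, N ⊆ Set.Icc 0 1 ∧ 0 < volume N ∧
      ∀ g : ℝ → ℕ → ℕ, ∃ h : ℕ → ℕ, ∀ x ∈ N, ∀ᶠ n in atTop, g x n ≤ h n)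
    (C : ℕ → Set ℕ) (hC : Monotone C)
    (ε : ℝ) (hε : 0 < ε)
    (f : ℕ → ℝ → ℝ)
    (hmaps : ∀ n : ℕ, ∀ x ∈ Set.Icc (0 : ℝ) 1, f n x ∈ Set.Icc (0 : ℝ) 1)
    (hconv : CgPointwise C f (Set.Icc 0 1)) :
    ∃ A ⊆ Set.Icc (0 : ℝ) 1, ENNReal.ofReal (1 - ε) ≤ volume A ∧
      CgUniform C f A := by
  obtain ⟨N, -, hN₀, hN⟩ := hyp
  have hf : ∀ n, ∀ x ∈ Icc (0 : ℝ) 1, 0 ≤ f n x := fun n x hx ↦ (hmaps n x hx).1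
  let Q : AddSubgroup ℝ := (Rat.castHom ℝ : ℚ →+ ℝ).range
  have : Countable Q := (countable_range ((↑) : ℚ → ℝ)).to_subtype
  have hQ : Dense (Q : Set ℝ) := Rat.denseRange_cast
  have : ErgodicVAdd Q ℝ volume := ergodicVAdd_of_dense volume hQ
  have hc : ENNReal.ofReal (1 - ε) < volume (Icc (0 : ℝ) 1) := by simpa using hε
  obtain ⟨A, hAI, hA, hunif⟩ := stmt_12_general (Γ := Q) hN hN₀.ne'
    measurableSet_Icc ((cgPointwise_iff_tendsto hC hf).1 hconv) hc
  exact ⟨A, hAI, hA.le,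
    (cgUniform_iff_tendstoUniformlyOn hC fun n x hx ↦ hf n x (hAI hx)).2 hunif⟩
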